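/- arXiv:1810.08121 — 9 statements merged into one kernel-verified Lean document; each statement's English description precedes it below -/
import Mathlib

section
/- Let A and B be 2×2 matrices with entries in R, with tensor components a_κ = Tr(σ_κ A) and b_κ = Tr(σ_κ B). Then for each k ∈ {1,2,3}, the k-th spin-vector component of the commutator satisfies Tr(σ_k [A,B]) = (1/2)( [a₀, b_k] + [a_k, b₀] + i ε_{k k₁ k₂} {a_{k₁}, b_{k₂}} ); in particular the torque term carrying one Levi-Civita symbol turns the commutator of matrices into an anticommutator of components. -/
open Matrix Kronecker

/-- The Pauli matrices `σ₀ = I₂, σ₁, σ₂, σ₃`, with complex entries regarded as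
elements of an associative unital `ℂ`-algebra `R` via the algebra map. -/
noncomputable def pauli (R : Type*) [Ring R] [Algebra ℂ R] : Fin 4 → Matrix (Fin 2) (Fin 2) R
  | 0 => !![1, 0; 0, 1]
  | 1 => !![0, 1; 1, 0]
  | 2 => !![0, -(algebraMap ℂ R Complex.I); algebraMap ℂ R Complex.I, 0]
  | 3 => !![1, 0; 0, -1]

/-- The Levi-Civita symbol `ε_{ijk}` on indices in `{1,2,3}` (represented by `Fin 3`). -/
def eps (i j k : Fin 3) : ℤ :=
  ((j.val : ℤ) - i.val) * ((k.val : ℤ) - i.val) * ((k.val : ℤ) - j.val) / 2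

/-- Spin-vector component of the commutator of two 2×2 matrices over a `ℂ`-algebra:
`Tr(σ_k [A,B]) = (1/2)([a₀,b_k] + [a_k,b₀] + i ε_{k k₁ k₂} {a_{k₁}, b_{k₂}})`;
the torque term with one Levi-Civita symbol is an anticommutator of components. -/
theorem spinor_commutator_vector (R : Type*) [Ring R] [Algebra ℂ R]
    (A B : Matrix (Fin 2) (Fin 2) R) (a b : Fin 4 → R)
    (ha : ∀ κ : Fin 4, a κ = (pauli R κ * A).trace)
    (hb : ∀ κ : Fin 4, b κ = (pauli R κ * B).trace) :
    ∀ k : Fin 3,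
      (pauli R k.succ * (A * B - B * A)).trace =
        (1/2 : ℂ) •
          ((a 0 * b k.succ - b k.succ * a 0) + (a k.succ * b 0 - b 0 * a k.succ)
            + algebraMap ℂ R Complex.I *
                ∑ k₁ : Fin 3, ∑ k₂ : Fin 3,
                  ((eps k k₁ k₂ : ℤ) : R) *
                    (a k₁.succ * b k₂.succ + b k₂.succ * a k₁.succ)) := by
  intro k
  have e : ∀ i j l : Fin 3, eps i j l = ![![![0,0,0],![0,0,1],![0,-1,0]],
      ![![0,0,-1],![0,0,0],![1,0,0]], ![![0,1,0],![-1,0,0],![0,0,0]]] i j l := by decide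
  have t0 : ∀ M : Matrix (Fin 2) (Fin 2) R, (pauli R 0 * M).trace = M 0 0 + M 1 1 := by
    intro M
    simp [pauli, Matrix.trace_fin_two, Matrix.vecMul, dotProduct, Fin.sum_univ_two, Algebra.smul_def, sub_eq_add_neg]
  have t1 : ∀ M : Matrix (Fin 2) (Fin 2) R, (pauli R 1 * M).trace = M 1 0 + M 0 1 := by
    intro M
    simp [pauli, Matrix.trace_fin_two, Matrix.vecMul, dotProduct, Fin.sum_univ_two, Algebra.smul_def, sub_eq_add_neg]
  have t2 : ∀ M : Matrix (Fin 2) (Fin 2) R, (pauli R 2 * M).trace =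
      Complex.I • M 0 1 - Complex.I • M 1 0 := by
    intro M
    simp [pauli, Matrix.trace_fin_two, Matrix.vecMul, dotProduct, Fin.sum_univ_two, Algebra.smul_def, sub_eq_add_neg]
    abel
  have t3 : ∀ M : Matrix (Fin 2) (Fin 2) R, (pauli R 3 * M).trace = M 0 0 - M 1 1 := by
    intro M
    simp [pauli, Matrix.trace_fin_two, Matrix.vecMul, dotProduct, Fin.sum_univ_two, Algebra.smul_def, sub_eq_add_neg]
  have s0 : (0 : Fin 3).succ = (1 : Fin 4) := rfl
  have s1 : (1 : Fin 3).succ = (2 : Fin 4) := rfl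
  have s2 : (2 : Fin 3).succ = (3 : Fin 4) := rfl
  have key : ∀ k : Fin 3, k = 0 ∨ k = 1 ∨ k = 2 := by decide
  rcases key k with rfl | rfl | rfl <;>
  · simp only [Fin.sum_univ_three, e, s0, s1, s2, ha, hb, t0, t1, t2, t3]
    simp [Matrix.mul_apply, Fin.sum_univ_two, ← Algebra.smul_def,
      mul_add, add_mul, mul_sub, sub_mul, smul_add, smul_sub, smul_smul, ← mul_assoc]
    module
end

section
/- Let A and B be 2×2 matrices with entries in R, with tensor components a_κ = Tr(σ_κ A) and b_κ = Tr(σ_κ B). Then the scalar component of the commutator satisfies Tr([A,B]) = (1/2)( [a₀, b₀] + Σ_{k=1}^{3} [a_k, b_k] ). -/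
open Matrix Kronecker

/-- Scalar component of the commutator of two 2×2 matrices over a `ℂ`-algebra:
`Tr([A,B]) = (1/2)([a₀,b₀] + Σ_k [a_k,b_k])`. -/
theorem spinor_commutator_scalar (R : Type*) [Ring R] [Algebra ℂ R]
    (A B : Matrix (Fin 2) (Fin 2) R) (a b : Fin 4 → R)
    (ha : ∀ κ : Fin 4, a κ = (pauli R κ * A).trace)
    (hb : ∀ κ : Fin 4, b κ = (pauli R κ * B).trace) :
    (A * B - B * A).trace =
      (1/2 : ℂ) •
        ((a 0 * b 0 - b 0 * a 0)
          + ∑ k : Fin 3, (a k.succ * b k.succ - b k.succ * a k.succ)) := by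
  have h2 : ∀ x y : R, (Complex.I • x) * (Complex.I • y) = -(x * y) := by
    intro x y
    rw [smul_mul_smul_comm, Complex.I_mul_I, neg_smul, one_smul]
  have a0 : a 0 = A 0 0 + A 1 1 := by
    simp [ha, pauli, Matrix.trace, Matrix.vecMul, dotProduct, Fin.sum_univ_two]
  have a1 : a 1 = A 1 0 + A 0 1 := by
    simp [ha, pauli, Matrix.trace, Matrix.vecMul, dotProduct, Fin.sum_univ_two]
  have a2 : a 2 = Complex.I • (A 0 1 - A 1 0) := by
    rw [ha, Algebra.smul_def]
    simp [pauli, Matrix.trace, Matrix.vecMul, dotProduct, Fin.sum_univ_two]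
    noncomm_ring
  have a3 : a 3 = A 0 0 - A 1 1 := by
    simp [ha, pauli, Matrix.trace, Matrix.vecMul, dotProduct, Fin.sum_univ_two, sub_eq_add_neg]
  have b0 : b 0 = B 0 0 + B 1 1 := by
    simp [hb, pauli, Matrix.trace, Matrix.vecMul, dotProduct, Fin.sum_univ_two]
  have b1 : b 1 = B 1 0 + B 0 1 := by
    simp [hb, pauli, Matrix.trace, Matrix.vecMul, dotProduct, Fin.sum_univ_two]
  have b2 : b 2 = Complex.I • (B 0 1 - B 1 0) := by
    rw [hb, Algebra.smul_def]
    simp [pauli, Matrix.trace, Matrix.vecMul, dotProduct, Fin.sum_univ_two]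
    noncomm_ring
  have b3 : b 3 = B 0 0 - B 1 1 := by
    simp [hb, pauli, Matrix.trace, Matrix.vecMul, dotProduct, Fin.sum_univ_two, sub_eq_add_neg]
  have e1 : (Fin.succ 0 : Fin 4) = 1 := rfl
  have e2 : (Fin.succ 1 : Fin 4) = 2 := rfl
  have e3 : (Fin.succ 2 : Fin 4) = 3 := rfl
  rw [Fin.sum_univ_three, e1, e2, e3, a0, a1, a2, a3, b0, b1, b2, b3, h2, h2]
  have key : ∀ x y : R, y = x + x → x = (1/2 : ℂ) • y := by
    intro x y h
    rw [h, ← two_smul ℂ x, smul_smul]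
    norm_num
  apply key
  simp only [Matrix.trace, Matrix.diag, Matrix.sub_apply, Matrix.mul_apply, Fin.sum_univ_two]
  noncomm_ring
end

section
/- Let A and B be 2×2 matrices with entries in R, with tensor components a_κ = Tr(σ_κ A) and b_κ = Tr(σ_κ B). Then for each k ∈ {1,2,3}, the k-th spin-vector component of the anticommutator satisfies Tr(σ_k {A,B}) = (1/2)( {a₀, b_k} + {a_k, b₀} + i ε_{k k₁ k₂} [a_{k₁}, b_{k₂}] ); in particular the torque term carrying one Levi-Civita symbol turns the anticommutator of matrices into a commutator of components. -/
open Matrix Kronecker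

/-- Spin-vector component of the anticommutator of two 2×2 matrices over a `ℂ`-algebra:
`Tr(σ_k {A,B}) = (1/2)({a₀,b_k} + {a_k,b₀} + i ε_{k k₁ k₂} [a_{k₁}, b_{k₂}])`;
the torque term with one Levi-Civita symbol is a commutator of components. -/
theorem spinor_anticommutator_vector (R : Type*) [Ring R] [Algebra ℂ R]
    (A B : Matrix (Fin 2) (Fin 2) R) (a b : Fin 4 → R)
    (ha : ∀ κ : Fin 4, a κ = (pauli R κ * A).trace)
    (hb : ∀ κ : Fin 4, b κ = (pauli R κ * B).trace) :
    ∀ k : Fin 3,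
      (pauli R k.succ * (A * B + B * A)).trace =
        (1/2 : ℂ) •
          ((a 0 * b k.succ + b k.succ * a 0) + (a k.succ * b 0 + b 0 * a k.succ)
            + algebraMap ℂ R Complex.I *
                ∑ k₁ : Fin 3, ∑ k₂ : Fin 3,
                  ((eps k k₁ k₂ : ℤ) : R) *
                    (a k₁.succ * b k₂.succ - b k₂.succ * a k₁.succ)) := by
  have t0 : ∀ M : Matrix (Fin 2) (Fin 2) R, (pauli R 0 * M).trace = M 0 0 + M 1 1 := by
    intro M
    simp [pauli, Matrix.trace, Matrix.vecMul, dotProduct, Fin.sum_univ_two, Algebra.smul_def, sub_eq_add_neg]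
  have t1 : ∀ M : Matrix (Fin 2) (Fin 2) R, (pauli R 1 * M).trace = M 1 0 + M 0 1 := by
    intro M
    simp [pauli, Matrix.trace, Matrix.vecMul, dotProduct, Fin.sum_univ_two, Algebra.smul_def, sub_eq_add_neg]
  have t2 : ∀ M : Matrix (Fin 2) (Fin 2) R,
      (pauli R 2 * M).trace = Complex.I • M 0 1 - Complex.I • M 1 0 := by
    intro M
    simp [pauli, Matrix.trace, Matrix.vecMul, dotProduct, Fin.sum_univ_two, Algebra.smul_def, sub_eq_add_neg]
    abel
  have t3 : ∀ M : Matrix (Fin 2) (Fin 2) R, (pauli R 3 * M).trace = M 0 0 - M 1 1 := by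
    intro M
    simp [pauli, Matrix.trace, Matrix.vecMul, dotProduct, Fin.sum_univ_two, Algebra.smul_def, sub_eq_add_neg]
  have s0 : (Fin.succ 0 : Fin 4) = 1 := rfl
  have s1 : (Fin.succ 1 : Fin 4) = 2 := rfl
  have s2 : (Fin.succ 2 : Fin 4) = 3 := rfl
  have hI : algebraMap ℂ R Complex.I = Complex.I • (1 : R) := Algebra.algebraMap_eq_smul_one _
  intro k
  fin_cases k <;>
  · simp only [Fin.zero_eta, Fin.mk_one, Fin.reduceFinMk, Fin.sum_univ_three, s0, s1, s2,
      ha, hb, t0, t1, t2, t3, Matrix.add_apply, Matrix.mul_apply, Fin.sum_univ_two]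
    simp only [eps, hI, mul_add, add_mul, mul_sub, sub_mul, smul_mul_assoc, mul_smul_comm,
      one_mul, smul_smul, smul_sub, smul_add, Complex.I_mul_I]
    norm_num [smul_smul, mul_assoc]
    try module
end

section
/- Let A and B be 2×2 matrices with entries in R, with tensor components a_κ = Tr(σ_κ A) and b_κ = Tr(σ_κ B). Then the scalar component of the anticommutator satisfies Tr({A,B}) = (1/2)( {a₀, b₀} + Σ_{k=1}^{3} {a_k, b_k} ). -/
open Matrix Kronecker

/-- Scalar component of the anticommutator of two 2×2 matrices over a `ℂ`-algebra:
`Tr({A,B}) = (1/2)({a₀,b₀} + Σ_k {a_k,b_k})`. -/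
theorem spinor_anticommutator_scalar (R : Type*) [Ring R] [Algebra ℂ R]
    (A B : Matrix (Fin 2) (Fin 2) R) (a b : Fin 4 → R)
    (ha : ∀ κ : Fin 4, a κ = (pauli R κ * A).trace)
    (hb : ∀ κ : Fin 4, b κ = (pauli R κ * B).trace) :
    (A * B + B * A).trace =
      (1/2 : ℂ) •
        ((a 0 * b 0 + b 0 * a 0)
          + ∑ k : Fin 3, (a k.succ * b k.succ + b k.succ * a k.succ)) := by
  have key : ∀ x y : R, (Complex.I • x) * (Complex.I • y) = -(x * y) := by
    intro x y
    rw [smul_mul_smul_comm, Complex.I_mul_I, neg_one_smul]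
  have p0 : ∀ M : Matrix (Fin 2) (Fin 2) R, (pauli R 0 * M).trace = M 0 0 + M 1 1 := by
    intro M
    simp [pauli, Matrix.trace, Matrix.vecMul, dotProduct, Fin.sum_univ_two]
  have p1 : ∀ M : Matrix (Fin 2) (Fin 2) R, (pauli R 1 * M).trace = M 1 0 + M 0 1 := by
    intro M
    simp [pauli, Matrix.trace, Matrix.vecMul, dotProduct, Fin.sum_univ_two]
  have p2 : ∀ M : Matrix (Fin 2) (Fin 2) R,
      (pauli R 2 * M).trace = Complex.I • (M 0 1 - M 1 0) := by
    intro M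
    simp [pauli, Matrix.trace, Matrix.vecMul, dotProduct, Fin.sum_univ_two, Algebra.smul_def, mul_sub]
    abel
  have p3 : ∀ M : Matrix (Fin 2) (Fin 2) R, (pauli R 3 * M).trace = M 0 0 - M 1 1 := by
    intro M
    simp [pauli, Matrix.trace, Matrix.vecMul, dotProduct, Fin.sum_univ_two, sub_eq_add_neg]
  have h1 : (Fin.succ (0 : Fin 3)) = (1 : Fin 4) := rfl
  have h2 : (Fin.succ (1 : Fin 3)) = (2 : Fin 4) := rfl
  have h3 : (Fin.succ (2 : Fin 3)) = (3 : Fin 4) := rfl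
  have half : ∀ x : R, x = (1/2 : ℂ) • (x + x) := by
    intro x
    rw [← two_smul ℂ x, smul_smul]
    norm_num
  rw [half (A * B + B * A).trace]
  congr 1
  rw [Fin.sum_univ_three, h1, h2, h3]
  simp only [ha, hb, p0, p1, p2, p3, key]
  simp only [Matrix.trace, Matrix.diag, Matrix.add_apply, Matrix.mul_apply, Fin.sum_univ_two]
  noncomm_ring
end

section
/- Let A and B be 4×4 matrices with entries in R, with two-spin tensor components a_{κ,λ} and b_{κ,λ}. Then for each l ∈ {1,2,3}, the first-spin vector component of the commutator satisfies Tr((σ_l ⊗ σ₀) [A,B]) = (1/4) Σ_{λ=0}^{3} ( [a_{0,λ}, b_{l,λ}] + [a_{l,λ}, b_{0,λ}] + i ε_{l l₁ l₂} {a_{l₁,λ}, b_{l₂,λ}} ). -/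
open Matrix Kronecker

/-- Partial trace over the first spin of `(σ_κ ⊗ 1) A`, in explicit form. -/
noncomputable def ptr {R : Type*} [Ring R] [Algebra ℂ R]
    (A : Matrix (Fin 2 × Fin 2) (Fin 2 × Fin 2) R) : Fin 4 → Fin 2 → Fin 2 → R
  | 0 => fun s t => A (0, s) (0, t) + A (1, s) (1, t)
  | 1 => fun s t => A (0, s) (1, t) + A (1, s) (0, t)
  | 2 => fun s t => Complex.I • (A (0, s) (1, t) - A (1, s) (0, t))
  | 3 => fun s t => A (0, s) (0, t) - A (1, s) (1, t)

/-- The components of a 2×2 array with respect to the Pauli matrices. -/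
noncomputable def pcomp {R : Type*} [Ring R] [Algebra ℂ R]
    (X : Fin 2 → Fin 2 → R) : Fin 4 → R
  | 0 => X 0 0 + X 1 1
  | 1 => X 0 1 + X 1 0
  | 2 => Complex.I • (X 0 1 - X 1 0)
  | 3 => X 0 0 - X 1 1

lemma trace_eq_pcomp {R : Type*} [Ring R] [Algebra ℂ R]
    (A : Matrix (Fin 2 × Fin 2) (Fin 2 × Fin 2) R) (κ μ : Fin 4) :
    ((pauli R κ ⊗ₖ pauli R μ) * A).trace = pcomp (ptr A κ) μ := by
  fin_cases κ <;> fin_cases μ <;>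
    simp [pauli, ptr, pcomp, Matrix.trace, Matrix.mul_apply, Fintype.sum_prod_type,
      Algebra.algebraMap_eq_smul_one, smul_sub, smul_add, smul_smul] <;> abel

lemma sum_pcomp {R : Type*} [Ring R] [Algebra ℂ R] (X Y : Fin 2 → Fin 2 → R) :
    ∑ μ, pcomp X μ * pcomp Y μ =
      (2 : ℂ) • (X 0 0 * Y 0 0 + X 0 1 * Y 1 0 + X 1 0 * Y 0 1 + X 1 1 * Y 1 1) := by
  simp only [Fin.sum_univ_four, pcomp, smul_mul_smul_comm, Complex.I_mul_I, mul_add, add_mul,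
    mul_sub, sub_mul]
  module

lemma ptr_sub {R : Type*} [Ring R] [Algebra ℂ R]
    (A B : Matrix (Fin 2 × Fin 2) (Fin 2 × Fin 2) R) (κ : Fin 4) (s t : Fin 2) :
    ptr (A - B) κ s t = ptr A κ s t - ptr B κ s t := by
  fin_cases κ <;> simp only [ptr, Matrix.sub_apply] <;> module

set_option maxHeartbeats 4000000 in
/-- First-spin vector component of the commutator of two 4×4 matrices over a `ℂ`-algebra:
`Tr((σ_l ⊗ σ₀) [A,B]) = (1/4) Σ_λ ([a_{0,λ}, b_{l,λ}] + [a_{l,λ}, b_{0,λ}]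
  + i ε_{l l₁ l₂} {a_{l₁,λ}, b_{l₂,λ}})`. -/
theorem two_spin_commutator_first_vector (R : Type*) [Ring R] [Algebra ℂ R]
    (A B : Matrix (Fin 2 × Fin 2) (Fin 2 × Fin 2) R) (a b : Fin 4 → Fin 4 → R)
    (ha : ∀ κ μ : Fin 4, a κ μ = ((pauli R κ ⊗ₖ pauli R μ) * A).trace)
    (hb : ∀ κ μ : Fin 4, b κ μ = ((pauli R κ ⊗ₖ pauli R μ) * B).trace) :
    ∀ l : Fin 3,
      ((pauli R l.succ ⊗ₖ pauli R 0) * (A * B - B * A)).trace =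
        (1/4 : ℂ) •
          ∑ μ : Fin 4,
            ((a 0 μ * b l.succ μ - b l.succ μ * a 0 μ)
              + (a l.succ μ * b 0 μ - b 0 μ * a l.succ μ)
              + algebraMap ℂ R Complex.I *
                  ∑ l₁ : Fin 3, ∑ l₂ : Fin 3,
                    ((eps l l₁ l₂ : ℤ) : R) *
                      (a l₁.succ μ * b l₂.succ μ + b l₂.succ μ * a l₁.succ μ)) := by
  obtain rfl : a = fun κ μ => pcomp (ptr A κ) μ := by
    funext κ μ; rw [ha, trace_eq_pcomp]
  obtain rfl : b = fun κ μ => pcomp (ptr B κ) μ := by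
    funext κ μ; rw [hb, trace_eq_pcomp]
  clear ha hb
  intro l
  have e : ∀ x : R, algebraMap ℂ R Complex.I * x = Complex.I • x := fun x =>
    (Algebra.smul_def _ _).symm
  rw [trace_eq_pcomp]
  simp only [e, mul_add, Finset.sum_add_distrib, Finset.sum_sub_distrib, ← Finset.smul_sum]
  rw [Finset.sum_comm (s := (Finset.univ : Finset (Fin 4)))]
  rw [Finset.sum_comm (s := (Finset.univ : Finset (Fin 4)))]
  simp only [Finset.sum_comm (s := (Finset.univ : Finset (Fin 4))) (t := (Finset.univ : Finset (Fin 3))),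
    ← Finset.mul_sum, sum_pcomp]
  fin_cases l <;>
    simp [Fin.sum_univ_three, eps, ptr, pcomp, Matrix.mul_apply, Fintype.sum_prod_type,
      mul_add, add_mul, mul_sub, sub_mul, smul_add, smul_sub, smul_smul, ← mul_assoc] <;>
    match_scalars <;> ring_nf <;> (try simp only [Complex.I_sq]) <;> norm_num
end

section
/- Let A and B be 4×4 matrices with entries in R, with two-spin tensor components a_{κ,λ} and b_{κ,λ}. Then for all l,m ∈ {1,2,3}, the entangled dyadic component of the commutator satisfies Tr((σ_l ⊗ σ_m) [A,B]) = (1/4)[ [a_{0,0}, b_{l,m}] + [a_{0,m}, b_{l,0}] + [a_{l,0}, b_{0,m}] + [a_{l,m}, b_{0,0}] + i ε_{m m₁ m₂}( {a_{0,m₁}, b_{l,m₂}} + {a_{l,m₁}, b_{0,m₂}} ) + i ε_{l l₁ l₂}( {a_{l₁,0}, b_{l₂,m}} + {a_{l₁,m}, b_{l₂,0}} ) − ε_{l l₁ l₂} ε_{m m₁ m₂} [a_{l₁,m₁}, b_{l₂,m₂}] ]; in particular the doubly entangled torque term carrying two Levi-Civita symbols is again a commutator of components. -/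
open Matrix Kronecker

lemma tr_two {S : Type*} [Ring S] (P X : Matrix (Fin 2) (Fin 2) S) :
    (P * X).trace = P 0 0 * X 0 0 + P 0 1 * X 1 0 + (P 1 0 * X 0 1 + P 1 1 * X 1 1) := by
  simp [Matrix.trace, Matrix.mul_apply, Fin.sum_univ_two]

/-- Single-spin product formula over a `ℂ`-algebra. -/
lemma single_spin (S : Type*) [Ring S] [Algebra ℂ S] (X Y : Matrix (Fin 2) (Fin 2) S)
    (x y : Fin 4 → S) (hx : ∀ κ, x κ = (pauli S κ * X).trace)
    (hy : ∀ κ, y κ = (pauli S κ * Y).trace) (l : Fin 3) :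
    (pauli S l.succ * (X * Y)).trace = (1/2 : ℂ) • (x 0 * y l.succ + x l.succ * y 0
      + Complex.I • ∑ j : Fin 3, ∑ k : Fin 3, eps l j k • (x j.succ * y k.succ)) := by
  have h2 : Complex.I * Complex.I = -1 := Complex.I_mul_I
  fin_cases l <;>
  · simp only [hx, hy, tr_two]
    simp [Fin.sum_univ_three, eps, pauli, Matrix.mul_apply, Fin.sum_univ_two,
      Algebra.algebraMap_eq_smul_one, mul_add, add_mul, smul_smul, mul_sub, sub_mul, smul_sub]
    try simp only [← mul_assoc, h2]
    try module

/-- Partial trace over the first spin. -/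
noncomputable def blk {R : Type*} (A : Matrix (Fin 2 × Fin 2) (Fin 2 × Fin 2) R) :
    Matrix (Fin 2) (Fin 2) (Matrix (Fin 2) (Fin 2) R) :=
  fun p q i j => A (p, i) (q, j)

lemma blk_mul {R : Type*} [Ring R] (A B : Matrix (Fin 2 × Fin 2) (Fin 2 × Fin 2) R) :
    blk (A * B) = blk A * blk B := by
  ext p q i j
  simp [blk, Matrix.mul_apply, Fintype.sum_prod_type, Matrix.add_apply]

lemma trace_blk (R : Type*) [Ring R] [Algebra ℂ R]
    (A : Matrix (Fin 2 × Fin 2) (Fin 2 × Fin 2) R) (κ μ : Fin 4) :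
    ((pauli R κ ⊗ₖ pauli R μ) * A).trace
      = (pauli R μ * (pauli (Matrix (Fin 2) (Fin 2) R) κ * blk A).trace).trace := by
  rw [tr_two, tr_two]
  fin_cases κ <;> fin_cases μ <;>
  · simp [pauli, blk, Matrix.trace, Matrix.mul_apply, Fin.sum_univ_two, Fintype.sum_prod_type,
      Algebra.algebraMap_eq_smul_one, mul_add, add_mul, smul_smul]
    try abel

lemma two_spin_prod (R : Type*) [Ring R] [Algebra ℂ R]
    (A B : Matrix (Fin 2 × Fin 2) (Fin 2 × Fin 2) R) (a b : Fin 4 → Fin 4 → R)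
    (ha : ∀ κ μ : Fin 4, a κ μ = ((pauli R κ ⊗ₖ pauli R μ) * A).trace)
    (hb : ∀ κ μ : Fin 4, b κ μ = ((pauli R κ ⊗ₖ pauli R μ) * B).trace) (l m : Fin 3) :
    ((pauli R l.succ ⊗ₖ pauli R m.succ) * (A * B)).trace =
      (1/2 : ℂ) • (
        (1/2 : ℂ) • (a 0 0 * b l.succ m.succ + a 0 m.succ * b l.succ 0
          + Complex.I • ∑ j : Fin 3, ∑ k : Fin 3, eps m j k • (a 0 j.succ * b l.succ k.succ))
        + (1/2 : ℂ) • (a l.succ 0 * b 0 m.succ + a l.succ m.succ * b 0 0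
          + Complex.I • ∑ j : Fin 3, ∑ k : Fin 3, eps m j k • (a l.succ j.succ * b 0 k.succ))
        + Complex.I • ∑ p : Fin 3, ∑ q : Fin 3, eps l p q •
          ((1/2 : ℂ) • (a p.succ 0 * b q.succ m.succ + a p.succ m.succ * b q.succ 0
          + Complex.I • ∑ j : Fin 3, ∑ k : Fin 3,
              eps m j k • (a p.succ j.succ * b q.succ k.succ)))) := by
  have key : ∀ κ ν : Fin 4, (pauli R m.succ *
      ((pauli (Matrix (Fin 2) (Fin 2) R) κ * blk A).trace
        * (pauli (Matrix (Fin 2) (Fin 2) R) ν * blk B).trace)).trace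
      = (1/2 : ℂ) • (a κ 0 * b ν m.succ + a κ m.succ * b ν 0
          + Complex.I • ∑ j : Fin 3, ∑ k : Fin 3, eps m j k • (a κ j.succ * b ν k.succ)) :=
    fun κ ν => single_spin R _ _ (a κ) (b ν) (fun μ => by rw [ha, trace_blk])
      (fun μ => by rw [hb, trace_blk]) m
  rw [trace_blk, blk_mul, single_spin _ _ _ _ _ (fun _ => rfl) (fun _ => rfl)]
  simp only [Matrix.mul_smul, Matrix.trace_smul, Matrix.mul_add, Matrix.trace_add,
    Matrix.mul_sum, Matrix.trace_sum, key]

lemma eps_int_smul {R : Type*} [Ring R] (n : ℤ) (x : R) : (n : R) * x = n • x := by simp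

lemma eps_sum {M : Type*} [AddCommGroup M] (l : Fin 3) (f : Fin 3 → Fin 3 → M) :
    ∑ j : Fin 3, ∑ k : Fin 3, eps l j k • f j k
      = f (l + 1) (l + 2) - f (l + 2) (l + 1) := by
  fin_cases l <;> simp [Fin.sum_univ_three, eps] <;> abel

/-- Entangled dyadic component of the commutator of two 4×4 matrices over a `ℂ`-algebra:
single-Levi-Civita torque terms are anticommutators of components, and the doubly
entangled torque term with two Levi-Civita symbols is again a commutator. -/
theorem two_spin_commutator_dyadic (R : Type*) [Ring R] [Algebra ℂ R]
    (A B : Matrix (Fin 2 × Fin 2) (Fin 2 × Fin 2) R) (a b : Fin 4 → Fin 4 → R)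
    (ha : ∀ κ μ : Fin 4, a κ μ = ((pauli R κ ⊗ₖ pauli R μ) * A).trace)
    (hb : ∀ κ μ : Fin 4, b κ μ = ((pauli R κ ⊗ₖ pauli R μ) * B).trace) :
    ∀ l m : Fin 3,
      ((pauli R l.succ ⊗ₖ pauli R m.succ) * (A * B - B * A)).trace =
        (1/4 : ℂ) •
          ((a 0 0 * b l.succ m.succ - b l.succ m.succ * a 0 0)
            + (a 0 m.succ * b l.succ 0 - b l.succ 0 * a 0 m.succ)
            + (a l.succ 0 * b 0 m.succ - b 0 m.succ * a l.succ 0)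
            + (a l.succ m.succ * b 0 0 - b 0 0 * a l.succ m.succ)
            + algebraMap ℂ R Complex.I *
                ∑ m₁ : Fin 3, ∑ m₂ : Fin 3,
                  ((eps m m₁ m₂ : ℤ) : R) *
                    ((a 0 m₁.succ * b l.succ m₂.succ + b l.succ m₂.succ * a 0 m₁.succ)
                      + (a l.succ m₁.succ * b 0 m₂.succ + b 0 m₂.succ * a l.succ m₁.succ))
            + algebraMap ℂ R Complex.I *
                ∑ l₁ : Fin 3, ∑ l₂ : Fin 3,
                  ((eps l l₁ l₂ : ℤ) : R) *
                    ((a l₁.succ 0 * b l₂.succ m.succ + b l₂.succ m.succ * a l₁.succ 0)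
                      + (a l₁.succ m.succ * b l₂.succ 0 + b l₂.succ 0 * a l₁.succ m.succ))
            - ∑ l₁ : Fin 3, ∑ l₂ : Fin 3, ∑ m₁ : Fin 3, ∑ m₂ : Fin 3,
                ((eps l l₁ l₂ : ℤ) : R) * ((eps m m₁ m₂ : ℤ) : R) *
                  (a l₁.succ m₁.succ * b l₂.succ m₂.succ
                    - b l₂.succ m₂.succ * a l₁.succ m₁.succ)) := by
  intro l m
  rw [Matrix.mul_sub, Matrix.trace_sub, two_spin_prod R A B a b ha hb,
    two_spin_prod R B A b a hb ha]
  simp only [Algebra.algebraMap_eq_smul_one, smul_mul_assoc, one_mul, mul_assoc, eps_int_smul,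
    ← Finset.smul_sum, eps_sum]
  generalize l + 1 = l₁
  generalize l + 2 = l₂
  generalize m + 1 = m₁
  generalize m + 2 = m₂
  match_scalars <;> (ring_nf; try simp [Complex.I_sq]; try norm_num)
end

section
/- Let A and B be 8×8 matrices with entries in R, with three-spin tensor components a_{κ,λ,μ} and b_{κ,λ,μ}. Then for each k ∈ {1,2,3}, the first-spin vector component of the product satisfies Tr((σ_k ⊗ σ₀ ⊗ σ₀) AB) = (1/8) Σ_{λ,μ=0}^{3} ( a_{0,λ,μ} b_{k,λ,μ} + a_{k,λ,μ} b_{0,λ,μ} + i ε_{k k₁ k₂} a_{k₁,λ,μ} b_{k₂,λ,μ} ). -/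
open Matrix Kronecker

namespace ThreeSpin

variable {R : Type*} [Ring R] [Algebra ℂ R]

/-- The one-spin component `Tr(σ_κ X)`. -/
noncomputable def T (κ : Fin 4) (X : Fin 2 → Fin 2 → R) : R :=
  ∑ i, ∑ j, pauli ℂ κ i j • X j i

lemma pauli_eq (κ : Fin 4) (i j : Fin 2) :
    pauli R κ i j = algebraMap ℂ R (pauli ℂ κ i j) := by
  fin_cases κ <;> fin_cases i <;> fin_cases j <;> simp [pauli]

/-- Components as iterated one-spin components, third spin outermost. -/
lemma comp_eq (A : Matrix ((Fin 2 × Fin 2) × Fin 2) ((Fin 2 × Fin 2) × Fin 2) R)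
    (κ μ ν : Fin 4) :
    ((pauli R κ ⊗ₖ pauli R μ ⊗ₖ pauli R ν) * A).trace =
      T ν (fun m n => T μ (fun k l => T κ (fun i j => A ((i, k), m) ((j, l), n)))) := by
  simp only [Matrix.trace, Matrix.diag, Matrix.mul_apply, Matrix.kroneckerMap_apply,
    Fintype.sum_prod_type, pauli_eq (R := R), ← map_mul, ← Algebra.smul_def, T, Fin.sum_univ_two]
  module

lemma T0 (X : Fin 2 → Fin 2 → R) : T 0 X = X 0 0 + X 1 1 := by
  simp [T, pauli, Fin.sum_univ_two]

lemma T1 (X : Fin 2 → Fin 2 → R) : T 1 X = X 1 0 + X 0 1 := by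
  simp [T, pauli, Fin.sum_univ_two]

lemma T2 (X : Fin 2 → Fin 2 → R) : T 2 X = Complex.I • (X 0 1 - X 1 0) := by
  simp [T, pauli, Fin.sum_univ_two, smul_sub]
  abel

lemma T3 (X : Fin 2 → Fin 2 → R) : T 3 X = X 0 0 - X 1 1 := by
  simp [T, pauli, Fin.sum_univ_two, sub_eq_add_neg]

/-- Completeness relation for one spin. -/
lemma sum_T_mul_T (X Y : Fin 2 → Fin 2 → R) :
    ∑ μ, T μ X * T μ Y = 2 * ∑ i, ∑ j, X i j * Y j i := by
  simp only [Fin.sum_univ_four, Fin.sum_univ_two, T0, T1, T2, T3, smul_mul_smul_comm,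
    Complex.I_mul_I, neg_smul, one_smul]
  noncomm_ring

/-- Summing out the second and third spin. -/
lemma sum_comp (A B : Matrix ((Fin 2 × Fin 2) × Fin 2) ((Fin 2 × Fin 2) × Fin 2) R)
    (a b : Fin 4 → Fin 4 → Fin 4 → R)
    (ha : ∀ κ μ ν : Fin 4,
      a κ μ ν = ((pauli R κ ⊗ₖ pauli R μ ⊗ₖ pauli R ν) * A).trace)
    (hb : ∀ κ μ ν : Fin 4,
      b κ μ ν = ((pauli R κ ⊗ₖ pauli R μ ⊗ₖ pauli R ν) * B).trace) (κ κ' : Fin 4) :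
    ∑ μ, ∑ ν, a κ μ ν * b κ' μ ν = 4 * ∑ m, ∑ n, ∑ k, ∑ l,
      T κ (fun i j => A ((i, k), m) ((j, l), n)) *
        T κ' (fun i j => B ((i, l), n) ((j, k), m)) := by
  simp only [ha, hb, comp_eq, sum_T_mul_T]
  rw [← Finset.mul_sum, Finset.sum_comm]
  have h : ∀ m : Fin 2, (∑ μ : Fin 4, ∑ n : Fin 2,
      T μ (fun k l => T κ (fun i j => A ((i, k), m) ((j, l), n))) *
        T μ (fun k l => T κ' (fun i j => B ((i, k), n) ((j, l), m)))) =
      2 * ∑ n, ∑ k, ∑ l, T κ (fun i j => A ((i, k), m) ((j, l), n)) *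
        T κ' (fun i j => B ((i, l), n) ((j, k), m)) := by
    intro m
    rw [Finset.sum_comm]
    simp only [sum_T_mul_T, Finset.mul_sum]
  simp only [h]
  rw [← Finset.mul_sum, ← mul_assoc]
  norm_num

/-- Product formula for one spin. -/
lemma one_spin (k : Fin 3) (X Y : Fin 2 → Fin 2 → R) :
    T 0 X * T k.succ Y + T k.succ X * T 0 Y + Complex.I •
      ∑ k₁ : Fin 3, ∑ k₂ : Fin 3, eps k k₁ k₂ • (T k₁.succ X * T k₂.succ Y) =
      2 * T k.succ (fun i j => ∑ l, X i l * Y l j) := by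
  have e1 : (Fin.succ 0 : Fin 4) = 1 := rfl
  have e2 : (Fin.succ 1 : Fin 4) = 2 := rfl
  have e3 : (Fin.succ 2 : Fin 4) = 3 := rfl
  fin_cases k <;>
  simp [Fin.sum_univ_three, Fin.sum_univ_two, e1, e2, e3, T0, T1, T2, T3, eps,
    smul_smul, smul_sub, smul_add, mul_add, add_mul, mul_sub, sub_mul, two_mul] <;>
  abel

lemma T_add (κ : Fin 4) (X Y : Fin 2 → Fin 2 → R) :
    T κ (fun i j => X i j + Y i j) = T κ X + T κ Y := by
  simp only [T, Fin.sum_univ_two, smul_add]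
  abel

lemma trace_prod (A B : Matrix ((Fin 2 × Fin 2) × Fin 2) ((Fin 2 × Fin 2) × Fin 2) R)
    (κ : Fin 4) :
    ((pauli R κ ⊗ₖ pauli R 0 ⊗ₖ pauli R 0) * (A * B)).trace = ∑ m, ∑ n, ∑ k, ∑ l,
      T κ (fun i j => ∑ s : Fin 2, A ((i, k), m) ((s, l), n) * B ((s, l), n) ((j, k), m)) := by
  rw [comp_eq]
  simp only [T0, Matrix.mul_apply, Fintype.sum_prod_type, Fin.sum_univ_two, T_add]
  abel

end ThreeSpin

/-- First-spin vector component of the product of two 8×8 matrices over a `ℂ`-algebra: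
`Tr((σ_k ⊗ σ₀ ⊗ σ₀) AB) = (1/8) Σ_{λ,μ} (a_{0,λ,μ} b_{k,λ,μ} + a_{k,λ,μ} b_{0,λ,μ}
  + i ε_{k k₁ k₂} a_{k₁,λ,μ} b_{k₂,λ,μ})`. -/
theorem three_spin_product_first_vector (R : Type*) [Ring R] [Algebra ℂ R]
    (A B : Matrix ((Fin 2 × Fin 2) × Fin 2) ((Fin 2 × Fin 2) × Fin 2) R)
    (a b : Fin 4 → Fin 4 → Fin 4 → R)
    (ha : ∀ κ μ ν : Fin 4,
      a κ μ ν = ((pauli R κ ⊗ₖ pauli R μ ⊗ₖ pauli R ν) * A).trace)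
    (hb : ∀ κ μ ν : Fin 4,
      b κ μ ν = ((pauli R κ ⊗ₖ pauli R μ ⊗ₖ pauli R ν) * B).trace) :
    ∀ k : Fin 3,
      ((pauli R k.succ ⊗ₖ pauli R 0 ⊗ₖ pauli R 0) * (A * B)).trace =
        (1/8 : ℂ) •
          ∑ μ : Fin 4, ∑ ν : Fin 4,
            (a 0 μ ν * b k.succ μ ν + a k.succ μ ν * b 0 μ ν
              + algebraMap ℂ R Complex.I *
                  ∑ k₁ : Fin 3, ∑ k₂ : Fin 3,
                    ((eps k k₁ k₂ : ℤ) : R) * (a k₁.succ μ ν * b k₂.succ μ ν)) := by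
  intro k
  have h : ∀ μ ν : Fin 4, (a 0 μ ν * b k.succ μ ν + a k.succ μ ν * b 0 μ ν
              + algebraMap ℂ R Complex.I *
                  ∑ k₁ : Fin 3, ∑ k₂ : Fin 3,
                    ((eps k k₁ k₂ : ℤ) : R) * (a k₁.succ μ ν * b k₂.succ μ ν)) =
      a 0 μ ν * b k.succ μ ν + a k.succ μ ν * b 0 μ ν + Complex.I •
        ∑ k₁ : Fin 3, ∑ k₂ : Fin 3, eps k k₁ k₂ • (a k₁.succ μ ν * b k₂.succ μ ν) := by
    intro μ ν
    simp only [zsmul_eq_mul]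
    rw [Algebra.smul_def]
  have hsum : ∀ F : Fin 3 → Fin 3 → Fin 4 → Fin 4 → R,
      ∑ μ, ∑ ν, ∑ k₁, ∑ k₂, F k₁ k₂ μ ν = ∑ k₁, ∑ k₂, ∑ μ, ∑ ν, F k₁ k₂ μ ν := by
    intro F
    simp only [Fin.sum_univ_three, Finset.sum_add_distrib]
  simp only [h, Finset.sum_add_distrib, ← Finset.smul_sum, hsum]
  simp only [ThreeSpin.sum_comp A B a b ha hb]
  have h8 : ∀ x y : R, (4 : R) * x = 4 * (2 * y) → y = 4 * (1/8 : ℂ) • x := by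
    intro x y hxy
    have e : (4 : R) * (2 * y) = (8 : ℂ) • y := by
      rw [Algebra.smul_def, map_ofNat, ← mul_assoc]
      norm_num
    rw [mul_smul_comm, hxy, e, smul_smul]
    norm_num
  have hq : ∀ (n : ℤ) (x : R), n • ((4 : R) * x) = 4 * (n • x) := by
    intro n x
    rw [mul_smul_comm]
  simp only [hq, ← Finset.mul_sum, ← mul_smul_comm, ← mul_add]
  apply h8
  congr 1
  rw [ThreeSpin.trace_prod]
  simp only [Finset.mul_sum, ← ThreeSpin.one_spin]
  simp only [Fin.sum_univ_three, Finset.sum_add_distrib, Finset.smul_sum, smul_add]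
end

section
/- Let A and B be 8×8 matrices with entries in R, with three-spin tensor components a_{κ,λ,μ} and b_{κ,λ,μ}. Then for all k,l,m ∈ {1,2,3}, the fully entangled rank-three tensor component of the product satisfies Tr((σ_k ⊗ σ_l ⊗ σ_m) AB) = (1/8)[ a_{k,l,m} b_{0,0,0} + a_{k,l,0} b_{0,0,m} + a_{k,0,m} b_{0,l,0} + a_{0,l,m} b_{k,0,0} + a_{k,0,0} b_{0,l,m} + a_{0,0,m} b_{k,l,0} + a_{0,l,0} b_{k,0,m} + a_{0,0,0} b_{k,l,m} + i ε_{k k₁ k₂}( a_{k₁,0,0} b_{k₂,l,m} + a_{k₁,l,0} b_{k₂,0,m} + a_{k₁,0,m} b_{k₂,l,0} + a_{k₁,l,m} b_{k₂,0,0} ) + i ε_{l l₁ l₂}( a_{0,l₁,0} b_{k,l₂,m} + a_{k,l₁,0} b_{0,l₂,m} + a_{0,l₁,m} b_{k,l₂,0} + a_{k,l₁,m} b_{0,l₂,0} ) + i ε_{m m₁ m₂}( a_{0,0,m₁} b_{k,l,m₂} + a_{0,l,m₁} b_{k,0,m₂} + a_{k,0,m₁} b_{0,l,m₂} + a_{k,l,m₁}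 b_{0,0,m₂} ) − ε_{k k₁ k₂} ε_{l l₁ l₂}( a_{k₁,l₁,0} b_{k₂,l₂,m} + a_{k₁,l₁,m} b_{k₂,l₂,0} ) − ε_{k k₁ k₂} ε_{m m₁ m₂}( a_{k₁,0,m₁} b_{k₂,l,m₂} + a_{k₁,l,m₁} b_{k₂,0,m₂} ) − ε_{l l₁ l₂} ε_{m m₁ m₂}( a_{0,l₁,m₁} b_{k,l₂,m₂} + a_{k,l₁,m₁} b_{0,l₂,m₂} ) − i ε_{k k₁ k₂} ε_{l l₁ l₂} ε_{m m₁ m₂} a_{k₁,l₁,m₁} b_{k₂,l₂,m₂} ]. -/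
open Matrix Kronecker

section Helpers

variable {M : Type*} [AddCommGroup M] [Module ℂ M]

/-- Levi-Civita contraction. -/
noncomputable def epsSum (k : Fin 3) (F : Fin 4 → Fin 4 → M) : M :=
  ∑ k₁ : Fin 3, ∑ k₂ : Fin 3, ((eps k k₁ k₂ : ℤ) : ℂ) • F k₁.succ k₂.succ

lemma epsSum_add (k : Fin 3) (F G : Fin 4 → Fin 4 → M) :
    epsSum k (fun α β => F α β + G α β) = epsSum k F + epsSum k G := by
  simp only [epsSum, smul_add, Finset.sum_add_distrib]

lemma epsSum_smul (k : Fin 3) (z : ℂ) (F : Fin 4 → Fin 4 → M) :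
    epsSum k (fun α β => z • F α β) = z • epsSum k F := by
  simp only [epsSum, Finset.smul_sum, smul_comm z]

/-- One-spin product functional. -/
noncomputable def spinProd (k : Fin 3) (F : Fin 4 → Fin 4 → M) : M :=
  F k.succ 0 + F 0 k.succ + Complex.I • epsSum k F

lemma spinProd_sum {ι : Type*} (s : Finset ι) (k : Fin 3) (F : ι → Fin 4 → Fin 4 → M) :
    spinProd k (fun α β => ∑ i ∈ s, F i α β) = ∑ i ∈ s, spinProd k (F i) := by
  classical
  induction s using Finset.induction_on with
  | empty => simp [spinProd, epsSum]
  | insert a s ha ih =>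
    simp only [Finset.sum_insert ha]
    rw [← ih]
    simp only [spinProd, epsSum_add, smul_add]
    abel

lemma spinProd_smul (k : Fin 3) (z : ℂ) (F : Fin 4 → Fin 4 → M) :
    spinProd k (fun α β => z • F α β) = z • spinProd k F := by
  simp only [spinProd, epsSum_smul, smul_add, smul_comm z]

set_option maxHeartbeats 2000000 in
lemma pauli_scalar (k : Fin 3) (i j ii jj : Fin 2) :
    spinProd k (fun α β => pauli ℂ α i j * pauli ℂ β ii jj) =
      2 * pauli ℂ k.succ ii j * (if i = jj then 1 else 0) := by
  fin_cases k <;> fin_cases i <;> fin_cases j <;> fin_cases ii <;> fin_cases jj <;>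
    simp [spinProd, epsSum, eps, pauli, Fin.sum_univ_three] <;> ring_nf <;> simp

lemma spinProd_pauli (k : Fin 3) (i j ii jj : Fin 2) (X : M) :
    spinProd k (fun α β => (pauli ℂ α i j * pauli ℂ β ii jj) • X) =
      (2 * pauli ℂ k.succ ii j * (if i = jj then 1 else 0)) • X := by
  rw [← pauli_scalar]
  simp only [spinProd, epsSum, add_smul, Finset.sum_smul, smul_assoc]

lemma pauli_map (R : Type*) [Ring R] [Algebra ℂ R] (κ : Fin 4) (i j : Fin 2) :
    pauli R κ i j = algebraMap ℂ R (pauli ℂ κ i j) := by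
  fin_cases κ <;> fin_cases i <;> fin_cases j <;> simp [pauli]

lemma trace_expand (R : Type*) [Ring R] [Algebra ℂ R]
    (A : Matrix ((Fin 2 × Fin 2) × Fin 2) ((Fin 2 × Fin 2) × Fin 2) R) (κ μ ν : Fin 4) :
    ((pauli R κ ⊗ₖ pauli R μ ⊗ₖ pauli R ν) * A).trace =
      ∑ i, ∑ j, (pauli ℂ κ i.1.1 j.1.1 * pauli ℂ μ i.1.2 j.1.2 * pauli ℂ ν i.2 j.2) • A j i := by
  simp only [Matrix.trace, Matrix.diag, Matrix.mul_apply, Matrix.kroneckerMap_apply,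
    pauli_map R, ← map_mul, Algebra.smul_def]

lemma spinProd_trace (R : Type*) [Ring R] [Algebra ℂ R]
    (A B : Matrix ((Fin 2 × Fin 2) × Fin 2) ((Fin 2 × Fin 2) × Fin 2) R) (k l m : Fin 3) :
    spinProd k (fun α β => spinProd l (fun γ δ => spinProd m (fun ε ζ =>
      ((pauli R α ⊗ₖ pauli R γ ⊗ₖ pauli R ε) * A).trace *
      ((pauli R β ⊗ₖ pauli R δ ⊗ₖ pauli R ζ) * B).trace))) =
    (8 : ℂ) •
      ((pauli R k.succ ⊗ₖ pauli R l.succ ⊗ₖ pauli R m.succ) * (A * B)).trace := by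
  have key : ∀ α β γ δ ε ζ : Fin 4,
      ((pauli R α ⊗ₖ pauli R γ ⊗ₖ pauli R ε) * A).trace *
      ((pauli R β ⊗ₖ pauli R δ ⊗ₖ pauli R ζ) * B).trace =
      ∑ ii, ∑ j, ∑ i, ∑ jj,
        (pauli ℂ α i.1.1 j.1.1 * pauli ℂ β ii.1.1 jj.1.1) •
        (pauli ℂ γ i.1.2 j.1.2 * pauli ℂ δ ii.1.2 jj.1.2) •
        (pauli ℂ ε i.2 j.2 * pauli ℂ ζ ii.2 jj.2) • (A j i * B jj ii) := by
    intro α β γ δ ε ζ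
    rw [trace_expand, trace_expand, Finset.sum_mul_sum, Finset.sum_comm]
    refine Finset.sum_congr rfl fun ii _ => ?_
    rw [Finset.sum_comm]
    simp only [Finset.sum_mul_sum]
    refine Finset.sum_congr rfl fun j _ => ?_
    refine Finset.sum_congr rfl fun i _ => ?_
    refine Finset.sum_congr rfl fun jj _ => ?_
    rw [smul_mul_smul_comm, smul_smul, smul_smul]
    congr 1
    ring
  simp only [key, spinProd_sum, spinProd_smul, spinProd_pauli]
  rw [trace_expand, Finset.smul_sum]
  refine Finset.sum_congr rfl fun ii _ => ?_
  rw [Finset.smul_sum]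
  refine Finset.sum_congr rfl fun j _ => ?_
  rw [Matrix.mul_apply, Finset.smul_sum, Finset.smul_sum]
  refine Finset.sum_congr rfl fun i _ => ?_
  rw [Finset.sum_eq_single i]
  · simp only [if_true, smul_smul]
    congr 1
    ring
  · intro jj _ hj
    simp only [smul_smul]
    have : ¬ (i.1.1 = jj.1.1 ∧ i.1.2 = jj.1.2 ∧ i.2 = jj.2) := by
      rintro ⟨h1, h2, h3⟩
      exact hj (Prod.ext (Prod.ext h1.symm h2.symm) h3.symm)
    by_cases h1 : i.1.1 = jj.1.1 <;> by_cases h2 : i.1.2 = jj.1.2 <;>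
      by_cases h3 : i.2 = jj.2 <;> simp_all
  · simp

end Helpers

set_option maxHeartbeats 4000000 in
/-- Fully entangled rank-three tensor component of the product of two 8×8 matrices
over a `ℂ`-algebra, with single, double, and triple Levi-Civita torque terms. -/
theorem three_spin_product_tensor (R : Type*) [Ring R] [Algebra ℂ R]
    (A B : Matrix ((Fin 2 × Fin 2) × Fin 2) ((Fin 2 × Fin 2) × Fin 2) R)
    (a b : Fin 4 → Fin 4 → Fin 4 → R)
    (ha : ∀ κ μ ν : Fin 4,
      a κ μ ν = ((pauli R κ ⊗ₖ pauli R μ ⊗ₖ pauli R ν) * A).trace)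
    (hb : ∀ κ μ ν : Fin 4,
      b κ μ ν = ((pauli R κ ⊗ₖ pauli R μ ⊗ₖ pauli R ν) * B).trace) :
    ∀ k l m : Fin 3,
      ((pauli R k.succ ⊗ₖ pauli R l.succ ⊗ₖ pauli R m.succ) * (A * B)).trace =
        (1/8 : ℂ) •
          (a k.succ l.succ m.succ * b 0 0 0 + a k.succ l.succ 0 * b 0 0 m.succ
            + a k.succ 0 m.succ * b 0 l.succ 0 + a 0 l.succ m.succ * b k.succ 0 0
            + a k.succ 0 0 * b 0 l.succ m.succ + a 0 0 m.succ * b k.succ l.succ 0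
            + a 0 l.succ 0 * b k.succ 0 m.succ + a 0 0 0 * b k.succ l.succ m.succ
            + algebraMap ℂ R Complex.I *
                ∑ k₁ : Fin 3, ∑ k₂ : Fin 3,
                  ((eps k k₁ k₂ : ℤ) : R) *
                    (a k₁.succ 0 0 * b k₂.succ l.succ m.succ
                      + a k₁.succ l.succ 0 * b k₂.succ 0 m.succ
                      + a k₁.succ 0 m.succ * b k₂.succ l.succ 0
                      + a k₁.succ l.succ m.succ * b k₂.succ 0 0)
            + algebraMap ℂ R Complex.I *
                ∑ l₁ : Fin 3, ∑ l₂ : Fin 3,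
                  ((eps l l₁ l₂ : ℤ) : R) *
                    (a 0 l₁.succ 0 * b k.succ l₂.succ m.succ
                      + a k.succ l₁.succ 0 * b 0 l₂.succ m.succ
                      + a 0 l₁.succ m.succ * b k.succ l₂.succ 0
                      + a k.succ l₁.succ m.succ * b 0 l₂.succ 0)
            + algebraMap ℂ R Complex.I *
                ∑ m₁ : Fin 3, ∑ m₂ : Fin 3,
                  ((eps m m₁ m₂ : ℤ) : R) *
                    (a 0 0 m₁.succ * b k.succ l.succ m₂.succ
                      + a 0 l.succ m₁.succ * b k.succ 0 m₂.succ
                      + a k.succ 0 m₁.succ * b 0 l.succ m₂.succ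
                      + a k.succ l.succ m₁.succ * b 0 0 m₂.succ)
            - ∑ k₁ : Fin 3, ∑ k₂ : Fin 3, ∑ l₁ : Fin 3, ∑ l₂ : Fin 3,
                ((eps k k₁ k₂ : ℤ) : R) * ((eps l l₁ l₂ : ℤ) : R) *
                  (a k₁.succ l₁.succ 0 * b k₂.succ l₂.succ m.succ
                    + a k₁.succ l₁.succ m.succ * b k₂.succ l₂.succ 0)
            - ∑ k₁ : Fin 3, ∑ k₂ : Fin 3, ∑ m₁ : Fin 3, ∑ m₂ : Fin 3,
                ((eps k k₁ k₂ : ℤ) : R) * ((eps m m₁ m₂ : ℤ) : R) *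
                  (a k₁.succ 0 m₁.succ * b k₂.succ l.succ m₂.succ
                    + a k₁.succ l.succ m₁.succ * b k₂.succ 0 m₂.succ)
            - ∑ l₁ : Fin 3, ∑ l₂ : Fin 3, ∑ m₁ : Fin 3, ∑ m₂ : Fin 3,
                ((eps l l₁ l₂ : ℤ) : R) * ((eps m m₁ m₂ : ℤ) : R) *
                  (a 0 l₁.succ m₁.succ * b k.succ l₂.succ m₂.succ
                    + a k.succ l₁.succ m₁.succ * b 0 l₂.succ m₂.succ)
            - algebraMap ℂ R Complex.I *
                ∑ k₁ : Fin 3, ∑ k₂ : Fin 3, ∑ l₁ : Fin 3, ∑ l₂ : Fin 3,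
                  ∑ m₁ : Fin 3, ∑ m₂ : Fin 3,
                    ((eps k k₁ k₂ : ℤ) : R) * ((eps l l₁ l₂ : ℤ) : R)
                      * ((eps m m₁ m₂ : ℤ) : R) *
                      (a k₁.succ l₁.succ m₁.succ * b k₂.succ l₂.succ m₂.succ)) := by
  intro k l m
  have h := spinProd_trace R A B k l m
  simp only [← ha, ← hb] at h
  have h8 : ((pauli R k.succ ⊗ₖ pauli R l.succ ⊗ₖ pauli R m.succ) * (A * B)).trace =
      (1/8 : ℂ) • ((8 : ℂ) •
        ((pauli R k.succ ⊗ₖ pauli R l.succ ⊗ₖ pauli R m.succ) * (A * B)).trace) := by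
    rw [smul_smul]; norm_num
  rw [h8, ← h]
  congr 1
  have hc : ∀ (n : ℤ) (x : R), (n : R) * x = (n : ℂ) • x := by
    intro n x
    rw [Algebra.smul_def, map_intCast]
  have hE : ∀ (k : Fin 3) (F : Fin 4 → Fin 4 → R),
      ∑ k₁ : Fin 3, ∑ k₂ : Fin 3, ((eps k k₁ k₂ : ℤ) : ℂ) • F k₁.succ k₂.succ =
        epsSum k F := fun _ _ => rfl
  simp only [mul_assoc]
  simp only [hc, ← Algebra.smul_def, ← Finset.smul_sum]
  have t1 := hE k (fun α β => a α 0 0 * b β l.succ m.succ + a α l.succ 0 * b β 0 m.succ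
    + a α 0 m.succ * b β l.succ 0 + a α l.succ m.succ * b β 0 0)
  have t2 := hE l (fun α β => a 0 α 0 * b k.succ β m.succ + a k.succ α 0 * b 0 β m.succ
    + a 0 α m.succ * b k.succ β 0 + a k.succ α m.succ * b 0 β 0)
  have t3 := hE m (fun α β => a 0 0 α * b k.succ l.succ β + a 0 l.succ α * b k.succ 0 β
    + a k.succ 0 α * b 0 l.succ β + a k.succ l.succ α * b 0 0 β)
  rw [t1, t2, t3]
  have hI : ∀ x : R, Complex.I • Complex.I • x = -x := by
    intro x
    rw [smul_smul, Complex.I_mul_I, neg_one_smul]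
  have t4 := hE k (fun α β => epsSum l (fun γ δ => a α γ 0 * b β δ m.succ
    + a α γ m.succ * b β δ 0))
  have t5 := hE k (fun α β => epsSum m (fun γ δ => a α 0 γ * b β l.succ δ
    + a α l.succ γ * b β 0 δ))
  have t6 := hE l (fun α β => epsSum m (fun γ δ => a 0 α γ * b k.succ β δ
    + a k.succ α γ * b 0 β δ))
  have t7 := hE k (fun α β => epsSum l (fun γ δ => epsSum m (fun ε ζ =>
    a α γ ε * b β δ ζ)))
  have s4 := fun k₁ k₂ : Fin 3 => hE l (fun γ δ => a k₁.succ γ 0 * b k₂.succ δ m.succ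
    + a k₁.succ γ m.succ * b k₂.succ δ 0)
  have s5 := fun k₁ k₂ : Fin 3 => hE m (fun γ δ => a k₁.succ 0 γ * b k₂.succ l.succ δ
    + a k₁.succ l.succ γ * b k₂.succ 0 δ)
  have s6 := fun k₁ k₂ : Fin 3 => hE m (fun γ δ => a 0 k₁.succ γ * b k.succ k₂.succ δ
    + a k.succ k₁.succ γ * b 0 k₂.succ δ)
  have s7 := fun k₁ k₂ : Fin 3 => hE l (fun γ δ => epsSum m (fun ε ζ =>
    a k₁.succ γ ε * b k₂.succ δ ζ))
  have u7 := fun k₁ k₂ l₁ l₂ : Fin 3 => hE m (fun ε ζ =>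
    a k₁.succ l₁.succ ε * b k₂.succ l₂.succ ζ)
  simp only [s4, s5, s6, u7, s7]
  rw [t4, t5, t6, t7]
  simp only [spinProd, epsSum_add, epsSum_smul, smul_add]
  simp only [hI, smul_neg]
  clear t1 t2 t3 t4 t5 t6 t7 s4 s5 s6 s7 u7 h8 h
  abel
end

section
/- Let A and B be 8×8 matrices with entries in R, with three-spin tensor components a_{κ,λ,μ} and b_{κ,λ,μ}. Then the total scalar component of the commutator satisfies Tr([A,B]) = (1/8) Σ_{κ,λ,μ=0}^{3} [a_{κ,λ,μ}, b_{κ,λ,μ}]. -/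
open Matrix Kronecker

/-- The complex Pauli matrices. -/
noncomputable def cpauli : Fin 4 → Matrix (Fin 2) (Fin 2) ℂ
  | 0 => !![1, 0; 0, 1]
  | 1 => !![0, 1; 1, 0]
  | 2 => !![0, -Complex.I; Complex.I, 0]
  | 3 => !![1, 0; 0, -1]

theorem pauli_eq (R : Type*) [Ring R] [Algebra ℂ R] (κ : Fin 4) (i j : Fin 2) :
    pauli R κ i j = algebraMap ℂ R (cpauli κ i j) := by
  fin_cases κ <;> fin_cases i <;> fin_cases j <;> simp [pauli, cpauli]

/-- Completeness of a family of matrices, with constant `c`. -/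
def Complete {ι n : Type*} [Fintype ι] [DecidableEq n] (c : ℂ) (P : ι → Matrix n n ℂ) : Prop :=
  ∀ i j k l, ∑ κ, P κ i j * P κ k l = c * ((if i = l then 1 else 0) * (if j = k then 1 else 0))

theorem cpauli_complete : Complete 2 cpauli := by
  intro i j k l
  fin_cases i <;> fin_cases j <;> fin_cases k <;> fin_cases l <;>
    simp [cpauli, Fin.sum_univ_four] <;> norm_num

theorem Complete.kron {ι n ι' n' : Type*} [Fintype ι] [DecidableEq n] [Fintype ι']
    [DecidableEq n'] {c c' : ℂ} {P : ι → Matrix n n ℂ} {Q : ι' → Matrix n' n' ℂ}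
    (hP : Complete c P) (hQ : Complete c' Q) :
    Complete (c * c') (fun x : ι × ι' => P x.1 ⊗ₖ Q x.2) := by
  rintro ⟨i, i'⟩ ⟨j, j'⟩ ⟨k, k'⟩ ⟨l, l'⟩
  have h := congrArg₂ (· * ·) (hP i j k l) (hQ i' j' k' l')
  simp only [Finset.sum_mul_sum, ← Fintype.sum_prod_type'] at h
  simp only [kroneckerMap_apply, Prod.mk.injEq]
  refine Eq.trans (Finset.sum_congr rfl fun x _ => by ring) (h.trans ?_)
  by_cases h1 : i = l <;> by_cases h2 : i' = l' <;> by_cases h3 : j = k <;>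
    by_cases h4 : j' = k' <;> simp [h1, h2, h3, h4]

theorem Complete.trace {R ι n : Type*} [Ring R] [Algebra ℂ R] [Fintype ι] [Fintype n]
    [DecidableEq n] {c : ℂ} {P : ι → Matrix n n ℂ} (hP : Complete c P) (A B : Matrix n n R) :
    ∑ κ, (∑ i, ∑ j, P κ i j • A j i) * (∑ k, ∑ l, P κ k l • B l k) = c • (A * B).trace := by
  have h : ∀ κ, (∑ i, ∑ j, P κ i j • A j i) * (∑ k, ∑ l, P κ k l • B l k)
      = ∑ i, ∑ j, ∑ k, ∑ l, (P κ i j * P κ k l) • (A j i * B l k) := by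
    intro κ
    simp only [Finset.sum_mul]
    simp only [Finset.mul_sum, smul_mul_smul_comm]
  simp only [h]
  rw [Finset.sum_comm]
  have h2 : ∀ i, ∑ κ, ∑ j, ∑ k, ∑ l, (P κ i j * P κ k l) • (A j i * B l k)
      = ∑ j, c • (A j i * B i j) := by
    intro i
    rw [Finset.sum_comm]
    refine Finset.sum_congr rfl fun j _ => ?_
    rw [Finset.sum_comm]
    have h3 : ∀ k, ∑ κ, ∑ l, (P κ i j * P κ k l) • (A j i * B l k)
        = if j = k then c • (A j i * B i k) else 0 := by
      intro k
      rw [Finset.sum_comm]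
      simp only [← Finset.sum_smul, hP i j k]
      by_cases hjk : j = k <;> simp [hjk]
    simp [h3]
  simp only [h2]
  rw [Finset.sum_comm]
  simp only [Matrix.trace, Matrix.diag, Matrix.mul_apply, Finset.smul_sum]

/-- Total scalar component of the commutator of two 8×8 matrices over a `ℂ`-algebra:
`Tr([A,B]) = (1/8) Σ_{κ,λ,μ} [a_{κ,λ,μ}, b_{κ,λ,μ}]` with `[x,y] = xy - yx`. -/
theorem three_spin_commutator_scalar (R : Type*) [Ring R] [Algebra ℂ R]
    (A B : Matrix ((Fin 2 × Fin 2) × Fin 2) ((Fin 2 × Fin 2) × Fin 2) R)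
    (a b : Fin 4 → Fin 4 → Fin 4 → R)
    (ha : ∀ κ μ ν : Fin 4,
      a κ μ ν = ((pauli R κ ⊗ₖ pauli R μ ⊗ₖ pauli R ν) * A).trace)
    (hb : ∀ κ μ ν : Fin 4,
      b κ μ ν = ((pauli R κ ⊗ₖ pauli R μ ⊗ₖ pauli R ν) * B).trace) :
    (A * B - B * A).trace =
      (1/8 : ℂ) •
        ∑ κ : Fin 4, ∑ μ : Fin 4, ∑ ν : Fin 4,
          (a κ μ ν * b κ μ ν - b κ μ ν * a κ μ ν) := by
  set P : (Fin 4 × Fin 4) × Fin 4 → Matrix ((Fin 2 × Fin 2) × Fin 2) ((Fin 2 × Fin 2) × Fin 2) ℂ :=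
    fun x => (cpauli x.1.1 ⊗ₖ cpauli x.1.2) ⊗ₖ cpauli x.2 with hPdef
  have hP : Complete (2 * 2 * 2) P := (cpauli_complete.kron cpauli_complete).kron cpauli_complete
  have key : ∀ (X : Matrix ((Fin 2 × Fin 2) × Fin 2) ((Fin 2 × Fin 2) × Fin 2) R) (κ μ ν : Fin 4),
      ((pauli R κ ⊗ₖ pauli R μ ⊗ₖ pauli R ν) * X).trace
        = ∑ i, ∑ j, P ((κ, μ), ν) i j • X j i := by
    intro X κ μ ν
    simp only [Matrix.trace, Matrix.diag, Matrix.mul_apply, kroneckerMap_apply, pauli_eq, hPdef,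
      ← map_mul, Algebra.smul_def]
  have h1 := hP.trace A B
  have h2 := hP.trace B A
  simp only [Fintype.sum_prod_type (α₁ := Fin 4 × Fin 4) (α₂ := Fin 4),
    Fintype.sum_prod_type (α₁ := Fin 4) (α₂ := Fin 4), ← key, ← ha, ← hb] at h1 h2
  simp only [Finset.sum_sub_distrib]
  rw [h1, h2, ← smul_sub, smul_smul, Matrix.trace_sub]
  norm_num
end
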